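/- Assume Γ(0) ≠ Γ(1) and 1 + ρ·ln(Γ(1)^{μ(1)} Γ(0)^{μ(0)}) > 0 for some ρ > 0, and let n ↦ L_n be a ρ-admissible scaling with associated sequence ρ_n. For each n ≥ 2 let (D_n, S_n) be a compound-binomial degree pair with parameters (n, L_n), and for t > 0 set x_n(t) = ( t · n^{−(1 + ρ_n ln(Γ(1)^{μ(1)} Γ(0)^{μ(0)}))} )^{1/√L_n}, with x_n(0) = 0. Then lim_{n→∞} sup_{t ≥ 0} | P(D_n ≤ t) − P(e^{σZ} ≤ x_n(t)) | = 0, where Z is standard Gaussian and σ = √(μ(0)μ(1)) · ln(Γ(1)/Γ(0)). -/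

import Mathlib

/-! The degree `D` is approximately log-normal because its conditional mean given `S` is.

Given `S = ℓ`, the degree is `Binomial(n - 1, p_ℓ)` with `p_ℓ = Γ1 ^ ℓ * Γ0 ^ (L - ℓ)`, so the log
of the conditional mean is affine in `S`:
`log ((n - 1) * p_S) = log (n - 1) + L * a + √L * U_n`, where `a = log (Γ1 ^ μ1 * Γ0 ^ μ0)` and
`U_n = σ * (S - L * μ1) / √(L * μ0 * μ1)`. As `S` is `Binomial(L, μ1)` and `L → ∞`, the
de Moivre–Laplace theorem (`tendstoInDistribution_binomial`, via characteristic functions) shows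
that `U_n` tends to `σ Z` in distribution.

The condition `1 + ρ * a > 0` says that the centring `c_n = log n + L * a` satisfies
`c_n / √L → ∞`. Hence the conditional mean tends to infinity in probability, and Chebyshev's
inequality given `S` (`binomial_chebyshev`, `measureReal_bad_le`) shows that, off an event
`bad n` of vanishing probability, `D` is within half of its conditional mean. There `D > 0`, and
`log D` differs from the log conditional mean by at most `log 2` (`log_approx`). So
`V_n = (log D - c_n) / √L` and `U_n` differ by `O(1 / √L)` off `bad n`, and by Slutsky's theorem
`V_n` tends to `σ Z` in distribution as well.

The limit law has no atoms because `Γ0 ≠ Γ1` forces `σ ≠ 0`. Pólya's theorem (`polya`,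
`uniform_cdf`) therefore makes the convergence of the distribution functions of `V_n` uniform.
Finally `log x_n(t) = (log t - c_n) / √L`, so off `bad n` the event `D ≤ t` is
`V_n ≤ log x_n(t)`, and `P(e^{σZ} ≤ x_n(t))` is the limiting distribution function at
`log x_n(t)`.
-/

open MeasureTheory ProbabilityTheory Filter Real
open scoped ENNReal NNReal

noncomputable section

/-- A compound-binomial degree pair `(D, S)` with parameters `(n, L)`:
`S` is Binomial(L, μ1) and, conditionally on `S = ℓ`, `D` is
Binomial(n-1, Γ1^ℓ Γ0^(L-ℓ)); equivalently the joint pmf is as below. -/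
def IsCompoundBinomialPair {Ω : Type*} [MeasurableSpace Ω] (P : Measure Ω)
    (μ1 μ0 Γ1 Γ0 : ℝ) (n L : ℕ) (D S : Ω → ℕ) : Prop :=
  Measurable D ∧ Measurable S ∧
    ∀ d ≤ n - 1, ∀ ℓ ≤ L,
      P {ω | D ω = d ∧ S ω = ℓ} =
        ENNReal.ofReal ((L.choose ℓ : ℝ) * μ1 ^ ℓ * μ0 ^ (L - ℓ) *
          ((n - 1).choose d : ℝ) * (Γ1 ^ ℓ * Γ0 ^ (L - ℓ)) ^ d *
          (1 - Γ1 ^ ℓ * Γ0 ^ (L - ℓ)) ^ (n - 1 - d))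

/-- A scaling `n ↦ L n` is `ρ`-admissible if `L n ~ ρ ln n` as `n → ∞`. -/
def IsAdmissible (ρ : ℝ) (L : ℕ → ℕ) : Prop :=
  (∀ n, 0 < L n) ∧
    Tendsto (fun n => (L n : ℝ) / (ρ * Real.log n)) atTop (nhds 1)

/-- `Ψ(x) = (x+1) ln(x+1) - x`. -/
def Psi (x : ℝ) : ℝ := (x + 1) * Real.log (x + 1) - x

/-- The standard Gaussian distribution function. -/
def Phi (z : ℝ) : ℝ := ∫ t in Set.Iic z, Real.exp (-t ^ 2 / 2) / Real.sqrt (2 * Real.pi)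

/-! ### Uniform convergence of distribution functions -/

/-- Pólya's theorem: distribution functions converging pointwise to a continuous distribution
function `G` converge uniformly. The error is controlled at the quantiles `g k` with
`G (g k) = k / N`, where `3 / N ≤ ε`, and monotonicity does the rest. -/
theorem polya {F : ℕ → ℝ → ℝ} {G : ℝ → ℝ} (hF : ∀ n, Monotone (F n))
    (hF0 : ∀ n x, 0 ≤ F n x) (hF1 : ∀ n x, F n x ≤ 1) (hG : Monotone G) (hGc : Continuous G)
    (hG0 : Tendsto G atBot (nhds 0)) (hG1 : Tendsto G atTop (nhds 1))
    (hFG : ∀ x, Tendsto (fun n => F n x) atTop (nhds (G x))) {ε : ℝ} (hε : 0 < ε) :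
    ∀ᶠ n in atTop, ∀ x, |F n x - G x| ≤ ε := by
  obtain ⟨N, hN⟩ := exists_nat_gt (3 / ε)
  have hN0 : (0 : ℝ) < N := lt_trans (by positivity) hN
  have hNε : 3 / (N : ℝ) ≤ ε := by
    rw [div_le_iff₀ hN0]; rw [div_lt_iff₀ hε] at hN; linarith
  have hgrid : ∀ k : ℕ, ∃ x, 0 < k → k < N → G x = k / N := by
    intro k
    by_cases hk : 0 < k ∧ k < N
    · have h0 : (0 : ℝ) < k / N := div_pos (by exact_mod_cast hk.1) hN0
      have h1 : (k : ℝ) / N < 1 := by rw [div_lt_one hN0]; exact_mod_cast hk.2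
      obtain ⟨a, ha⟩ := (hG0.eventually_lt_const h0).exists
      obtain ⟨b, hb⟩ := (hG1.eventually_const_lt h1).exists
      obtain ⟨x, hx⟩ := mem_range_of_exists_le_of_exists_ge hGc ⟨a, ha.le⟩ ⟨b, hb.le⟩
      exact ⟨x, fun _ _ => hx⟩
    · exact ⟨0, fun h h' => absurd ⟨h, h'⟩ hk⟩
  choose g hg using hgrid
  have hev : ∀ᶠ n in atTop, ∀ k ∈ Finset.range N, |F n (g k) - G (g k)| < 1 / N := by
    rw [Filter.eventually_all_finset]
    intro k _
    have := (hFG (g k)).sub_const (G (g k))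
    rw [sub_self] at this
    have := this.abs
    rw [abs_zero] at this
    exact this.eventually_lt_const (by positivity)
  filter_upwards [hev] with n hn x
  have hG0' : ∀ x, 0 ≤ G x := hG.le_of_tendsto hG0
  have hG1' : ∀ x, G x ≤ 1 := hG.ge_of_tendsto hG1
  set k := ⌊(N : ℝ) * G x⌋₊ with hk
  have hk1 : (k : ℝ) / N ≤ G x := by
    rw [div_le_iff₀ hN0, mul_comm]; exact Nat.floor_le (mul_nonneg hN0.le (hG0' x))
  have hk2 : G x < (k + 1 : ℝ) / N := by
    rw [lt_div_iff₀ hN0, mul_comm]; exact Nat.lt_floor_add_one _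
  have e1 : (k + 1 : ℝ) / N = k / N + 1 / N := by ring
  have e3 : 3 / (N : ℝ) = 1 / N + 1 / N + 1 / N := by ring
  have hp : 0 < 1 / (N : ℝ) := by positivity
  rw [abs_le]
  constructor
  · by_cases h2 : 2 ≤ k
    · obtain ⟨j, hj⟩ : ∃ j, k = j + 1 := ⟨k - 1, by omega⟩
      have hkN : k ≤ N := by
        have : (k : ℝ) / N ≤ 1 := hk1.trans (hG1' x)
        rw [div_le_one hN0] at this; exact_mod_cast this
      have hgj := hg j (by omega) (by omega)
      have hj' : (k : ℝ) / N = j / N + 1 / N := by rw [hj]; push_cast; ring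
      have hle : g j ≤ x := by
        by_contra! hlt
        have := hG hlt.le
        linarith
      have := hF n hle
      have h3 := (abs_lt.1 (hn j (by simp; omega))).1
      linarith
    · have : (k : ℝ) ≤ 1 := by exact_mod_cast (by omega : k ≤ 1)
      have : (k : ℝ) / N ≤ 1 / N := by gcongr
      have := hF0 n x
      linarith
  · by_cases h2 : k + 1 < N
    · have hgj := hg (k + 1) (by omega) h2
      push_cast at hgj
      have hle : x ≤ g (k + 1) := by
        by_contra! hlt
        have := hG hlt.le
        linarith
      have := hF n hle
      have h3 := (abs_lt.1 (hn (k + 1) (by simpa using h2))).2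
      linarith
    · have : (N : ℝ) ≤ k + 1 := by exact_mod_cast (by omega : N ≤ k + 1)
      have : 1 ≤ (k + 1 : ℝ) / N := by rwa [one_le_div hN0]
      have := hF1 n x
      linarith

theorem continuous_cdf_of_noAtoms (ν : Measure ℝ) [IsProbabilityMeasure ν] [NullSingletonClass ν] :
    Continuous (cdf ν) := by
  rw [continuous_iff_continuousAt]
  intro x
  rw [(monotone_cdf ν).continuousAt_iff_leftLim_eq_rightLim, StieltjesFunction.rightLim_eq]
  have h : (cdf ν).measure {x} = 0 := by rw [measure_cdf]; simp
  rw [StieltjesFunction.measure_singleton, ENNReal.ofReal_eq_zero] at h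
  exact le_antisymm ((monotone_cdf ν).leftLim_le le_rfl) (by linarith)

/-- Convergence in distribution to an atomless law is uniform convergence of distribution
functions. -/
theorem uniform_cdf {Ω Ω' : Type*} [MeasurableSpace Ω] [MeasurableSpace Ω'] {P : Measure Ω}
    {P' : Measure Ω'} [IsProbabilityMeasure P] [IsProbabilityMeasure P'] {X : ℕ → Ω → ℝ}
    {Z : Ω' → ℝ} (h : TendstoInDistribution X atTop Z (fun _ => P) P')
    [NullSingletonClass (P'.map Z)] {ε : ℝ} (hε : 0 < ε) :
    ∀ᶠ n in atTop, ∀ x, |P.real {ω | X n ω ≤ x} - cdf (P'.map Z) x| ≤ ε := by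
  have : IsProbabilityMeasure (P'.map Z) := Measure.isProbabilityMeasure_map h.aemeasurable_limit
  refine polya (G := cdf (P'.map Z)) ?_ (fun _ _ => measureReal_nonneg)
    (fun _ _ => measureReal_le_one)
    (monotone_cdf _) (continuous_cdf_of_noAtoms _) (tendsto_cdf_atBot _) (tendsto_cdf_atTop _)
    ?_ hε
  · intro n x y hxy
    exact measureReal_mono fun ω (hω : X n ω ≤ x) => hω.trans hxy
  · intro x
    have := ProbabilityMeasure.tendsto_measure_of_null_frontier_of_tendsto' h.tendsto
      (E := Set.Iic x) (by simp)
    have := (ENNReal.tendsto_toReal (measure_ne_top (P'.map Z) _)).comp this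
    rw [cdf_eq_real]
    refine this.congr fun n => ?_
    simp only [Function.comp, ProbabilityMeasure.coe_mk]
    rw [Measure.map_apply_of_aemeasurable (h.forall_aemeasurable n) measurableSet_Iic]
    rfl

/-! ### Binomial laws -/

/-- Chebyshev's inequality at half the mean. The variance is read off from the variance of the
Bernstein polynomials. -/
theorem binomial_chebyshev (m : ℕ) (p : unitInterval) (hm : 0 < (m : ℝ) * p) :
    (binomial m p).real {d | (m : ℝ) * p / 2 < |(d : ℝ) - m * p|} ≤ 4 / (m * p) := by
  have hm0 : m ≠ 0 := by rintro rfl; simp at hm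
  have hvar : ∫ d, ((d : ℝ) - m * p) ^ 2 ∂(binomial m p) = m * p * (1 - p) := by
    rw [integral_binomial]
    have h := bernstein.variance hm0 p
    have hm' : (m : ℝ) ≠ 0 := by exact_mod_cast hm0
    have h2 : (m : ℝ) * p * (1 - p) = (m : ℝ) ^ 2 * ((p : ℝ) * (1 - p) / m) := by field_simp
    rw [h2, ← h, Finset.mul_sum, ← Nat.range_succ_eq_Iic, Finset.sum_range]
    refine Finset.sum_congr rfl fun k _ => ?_
    rw [bernstein_apply, bernstein.z, smul_eq_mul]
    simp only
    field_simp
    ring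
  have := mul_meas_ge_le_integral_of_nonneg (μ := binomial m p)
    (f := fun d : ℕ => ((d : ℝ) - m * p) ^ 2) (Eventually.of_forall fun d => sq_nonneg _)
    (integrable_binomial _) ((m * p / 2) ^ 2)
  rw [hvar] at this
  have hsub : (binomial m p).real {d : ℕ | (m : ℝ) * p / 2 < |(d : ℝ) - m * p|} ≤
      (binomial m p).real {d : ℕ | ((m : ℝ) * p / 2) ^ 2 ≤ ((d : ℝ) - m * p) ^ 2} := by
    refine measureReal_mono ?_ (measure_ne_top _ _)
    intro d hd
    simp only [Set.mem_ofPred_eq] at hd ⊢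
    exact sq_le_sq.2 (by rw [abs_of_pos (by positivity)]; exact hd.le)
  refine hsub.trans ?_
  rw [le_div_iff₀ hm]
  have hp : (p : ℝ) ≤ 1 := p.2.2
  have hp0 : (0 : ℝ) ≤ p := p.2.1
  set q := (binomial m p).real {d : ℕ | ((m : ℝ) * p / 2) ^ 2 ≤ ((d : ℝ) - m * p) ^ 2}
  have : (m * p : ℝ) * (q * (m * p)) ≤ (m * p) * 4 := by nlinarith
  exact le_of_mul_le_mul_left this hm

/-- The characteristic function of a centred, scaled `Binomial(L, p)` law is the `L`-th power of
that of a centred Bernoulli law. -/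
theorem charFun_map_binomial (L : ℕ) (p : unitInterval) (a b t : ℝ) :
    charFun ((binomial L p).map (fun k : ℕ => a * ((k : ℝ) - L * b))) t =
      (charFun ((binomial 1 p).map (fun k : ℕ => (k : ℝ) - b)) (a * t)) ^ L := by
  rw [charFun_apply_real, charFun_apply_real, integral_map .of_discrete (by fun_prop),
    integral_map .of_discrete (by fun_prop), integral_binomial, integral_binomial,
    ← Nat.range_succ_eq_Iic, ← Nat.range_succ_eq_Iic, Finset.sum_range_succ _ 1, Finset.sum_range_one,
    add_comm (_ • _), add_pow]
  refine Finset.sum_congr rfl fun k hk => ?_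
  have hk : k ≤ L := by simpa [Nat.lt_succ_iff] using hk
  simp only [Complex.real_smul, mul_pow]
  have e : Complex.exp (t * (a * ((k : ℝ) - L * b) : ℝ) * Complex.I) =
      Complex.exp ((a * t : ℝ) * ((1 : ℕ) - b : ℝ) * Complex.I) ^ k *
      Complex.exp ((a * t : ℝ) * ((0 : ℕ) - b : ℝ) * Complex.I) ^ (L - k) := by
    rw [← Complex.exp_nat_mul, ← Complex.exp_nat_mul, ← Complex.exp_add]
    congr 1
    push_cast [Nat.cast_sub hk]
    ring
  rw [e]
  push_cast
  simp
  ring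

/-- The de Moivre–Laplace theorem. The variables `S n` need not be coupled in any way across `n`;
only their laws `Binomial(L n, p)` matter. -/
theorem tendstoInDistribution_binomial {Ω : Type*} [MeasurableSpace Ω] {P : Measure Ω}
    [IsProbabilityMeasure P] (p : unitInterval) (hp0 : 0 < (p : ℝ)) (hp1 : (p : ℝ) < 1) (L : ℕ → ℕ)
    (hL : Tendsto L atTop atTop) (S : ℕ → Ω → ℕ) (hS : ∀ n, HasLaw (S n) (binomial (L n) p) P) :
    TendstoInDistribution (fun n ω => (√(L n))⁻¹ * (√(p * (1 - p)))⁻¹ * ((S n ω : ℝ) - L n * p))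
      atTop (id : ℝ → ℝ) (fun _ => P) (gaussianReal 0 1) := by
  have hv : 0 < (p : ℝ) * (1 - p) := mul_pos hp0 (by linarith)
  set X : ℕ → ℝ := fun k => (√(p * (1 - p)))⁻¹ * ((k : ℝ) - (1 : ℕ) * p) with hX
  have hm (n : ℕ) : AEMeasurable
      (fun ω => (√(L n))⁻¹ * (√(p * (1 - p)))⁻¹ * ((S n ω : ℝ) - L n * p)) P := by
    have h1 := (hS n).aemeasurable
    have h2 : AEMeasurable (fun ω => (S n ω : ℝ)) P :=
      (measurable_of_countable (fun k : ℕ => (k : ℝ))).comp_aemeasurable h1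
    fun_prop
  refine ⟨hm, by fun_prop, ProbabilityMeasure.tendsto_iff_tendsto_charFun.2 fun t => ?_⟩
  have h0 : (binomial 1 p)[X] = 0 := by
    rw [integral_binomial, ← Nat.range_succ_eq_Iic, Finset.sum_range_succ, Finset.sum_range_one]
    simp [hX]; ring
  have h1 : (binomial 1 p)[X ^ 2] = 1 := by
    rw [integral_binomial, ← Nat.range_succ_eq_Iic, Finset.sum_range_succ, Finset.sum_range_one]
    simp [hX, mul_pow, Real.sq_sqrt hv.le]
    have : (1 - (p : ℝ)) ≠ 0 := by linarith
    field_simp; ring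
  have key := (tendsto_charFun_inv_sqrt_mul_pow (P := binomial 1 p) (X := X)
    (by fun_prop) h0 h1 t).comp hL
  simp only [ProbabilityMeasure.coe_mk, Measure.map_id, charFun_gaussianReal]
  convert key using 2 with n
  · have e : (fun ω => (√(L n))⁻¹ * (√(p * (1 - p)))⁻¹ * ((S n ω : ℝ) - L n * p)) =
      (fun k : ℕ => (√(L n))⁻¹ * (√(p * (1 - p)))⁻¹ * ((k : ℝ) - L n * p)) ∘ S n := rfl
    rw [e, ← AEMeasurable.map_map_of_aemeasurable .of_discrete (hS n).aemeasurable, (hS n).map_eq,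
      charFun_map_binomial]
    simp only [Function.comp, hX]
    rw [charFun_map_binomial 1 p (√(p * (1 - p)))⁻¹ p, pow_one]
    congr 2; ring
  · simp [neg_div]

/-! ### Compound-binomial pairs: the degree is close to its conditional mean -/

/-- A pair with compound-binomial point masses is a `Binomial(L, q)` variable followed by a
`Binomial(m, p ℓ)` transition. The masses are only given for `d ≤ m` and `ℓ ≤ L`; since the
left-hand side vanishes elsewhere it is dominated by the right-hand side, and two probability
measures one of which dominates the other are equal. -/
theorem map_joint {Ω : Type*} [MeasurableSpace Ω] {P : Measure Ω}
    [IsProbabilityMeasure P] (L m : ℕ) (q : unitInterval) (p : ℕ → unitInterval)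
    (D S : Ω → ℕ) (hD : Measurable D) (hS : Measurable S)
    (h : ∀ d ≤ m, ∀ ℓ ≤ L, P {ω | D ω = d ∧ S ω = ℓ} =
      ENNReal.ofReal ((L.choose ℓ : ℝ) * q ^ ℓ * (1 - q) ^ (L - ℓ) *
        ((m.choose d : ℝ) * p ℓ ^ d * (1 - p ℓ) ^ (m - d)))) :
    (binomial L q) ⊗ₘ (Kernel.ofFunOfCountable fun ℓ => binomial m (p ℓ)) =
      P.map (fun ω => (S ω, D ω)) := by
  set κ : Kernel ℕ ℕ := Kernel.ofFunOfCountable fun ℓ => binomial m (p ℓ) with hκ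
  have : IsMarkovKernel κ := ⟨fun ℓ => by
    change IsProbabilityMeasure (binomial m (p ℓ)); infer_instance⟩
  have : IsProbabilityMeasure (P.map (fun ω => (S ω, D ω))) :=
    Measure.isProbabilityMeasure_map (by fun_prop)
  refine Measure.eq_of_le_of_measure_univ_eq ?_ (by simp)
  rw [Measure.le_iff]
  suffices hs : ∀ x : ℕ × ℕ, (binomial L q ⊗ₘ κ) {x} ≤ (P.map (fun ω => (S ω, D ω))) {x} by
    intro s _
    rw [← Measure.tsum_indicator_apply_singleton _ s (.of_discrete),
      ← Measure.tsum_indicator_apply_singleton _ s (.of_discrete)]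
    refine ENNReal.tsum_le_tsum fun x => ?_
    by_cases hx : x ∈ s <;> simp [hx, hs]
  rintro ⟨ℓ, d⟩
  have e : (binomial L q ⊗ₘ κ) {(ℓ, d)} = binomial L q {ℓ} * binomial m (p ℓ) {d} := by
    rw [← Set.singleton_prod_singleton, Measure.compProd_apply_prod .of_discrete .of_discrete]
    simp [hκ, Kernel.ofFunOfCountable]
  rw [e, Measure.map_apply (by fun_prop) (.of_discrete), binomial_singleton, binomial_singleton,
    ← ENNReal.ofReal_mul binomial_nonneg]
  by_cases hℓ : ℓ ≤ L
  · by_cases hd : d ≤ m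
    · rw [← h d hd ℓ hℓ]
      refine measure_mono ?_
      rintro ω ⟨h1, h2⟩
      simp [h1, h2]
    · simp [Nat.choose_eq_zero_of_lt (not_le.1 hd)]
  · simp [Nat.choose_eq_zero_of_lt (not_le.1 hℓ)]

theorem hasLaw_fst {Ω : Type*} [MeasurableSpace Ω] {P : Measure Ω}
    [IsProbabilityMeasure P] (L m : ℕ) (q : unitInterval) (p : ℕ → unitInterval)
    (D S : Ω → ℕ) (hD : Measurable D) (hS : Measurable S)
    (h : (binomial L q) ⊗ₘ (Kernel.ofFunOfCountable fun ℓ => binomial m (p ℓ)) =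
      P.map (fun ω => (S ω, D ω))) : HasLaw S (binomial L q) P := by
  have : IsMarkovKernel (Kernel.ofFunOfCountable fun ℓ => binomial m (p ℓ) : Kernel ℕ ℕ) :=
    ⟨fun ℓ => by change IsProbabilityMeasure (binomial m (p ℓ)); infer_instance⟩
  refine ⟨hS.aemeasurable, ?_⟩
  have := congrArg Measure.fst h
  rw [Measure.fst_compProd, Measure.fst_map_prodMk hD] at this
  exact this.symm

/-- Apart from the event that the conditional mean `m * p (S ω)` is below `K`, the probability that
`D` deviates from it by more than half is at most `4 / K`, by Chebyshev's inequality given `S`. -/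
theorem measureReal_bad_le {Ω : Type*} [MeasurableSpace Ω] {P : Measure Ω}
    [IsProbabilityMeasure P] (L m : ℕ) (q : unitInterval) (p : ℕ → unitInterval)
    (D S : Ω → ℕ) (hD : Measurable D) (hS : Measurable S)
    (h : (binomial L q) ⊗ₘ (Kernel.ofFunOfCountable fun ℓ => binomial m (p ℓ)) =
      P.map (fun ω => (S ω, D ω))) {K : ℝ} (hK : 0 < K) :
    P.real {ω | ¬ (S ω ≤ L ∧ |(D ω : ℝ) - m * p (S ω)| ≤ m * p (S ω) / 2)} ≤
      P.real {ω | S ω ≤ L ∧ (m : ℝ) * p (S ω) < K} + 4 / K := by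
  set κ : Kernel ℕ ℕ := Kernel.ofFunOfCountable fun ℓ => binomial m (p ℓ) with hκ
  have : IsMarkovKernel κ := ⟨fun ℓ => by
    change IsProbabilityMeasure (binomial m (p ℓ)); infer_instance⟩
  set T : Set (ℕ × ℕ) := {x | K ≤ (m : ℝ) * p x.1 ∧
    (m : ℝ) * p x.1 / 2 < |(x.2 : ℝ) - m * p x.1|} with hT
  have h1 : P.real {ω | L < S ω} = 0 := by
    have := ae_le_of_hasLaw_binomial (hasLaw_fst L m q p D S hD hS h)
    rw [ae_iff] at this
    simp only [not_le] at this
    simp [measureReal_def, this]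
  have h2 : P.real {ω | (S ω, D ω) ∈ T} ≤ 4 / K := by
    have e : P {ω | (S ω, D ω) ∈ T} = (binomial L q ⊗ₘ κ) T := by
      rw [h, Measure.map_apply (by fun_prop) (.of_discrete)]; rfl
    rw [measureReal_def, e]
    refine ENNReal.toReal_le_of_le_ofReal (by positivity) ?_
    rw [Measure.compProd_apply .of_discrete]
    calc _ ≤ ∫⁻ _, ENNReal.ofReal (4 / K) ∂(binomial L q) := by
          refine lintegral_mono fun ℓ => ?_
          by_cases hℓ : K ≤ (m : ℝ) * p ℓ
          · have hb := (binomial_chebyshev m (p ℓ) (hK.trans_le hℓ)).trans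
              (div_le_div_of_nonneg_left (by norm_num) hK hℓ)
            have : κ ℓ (Prod.mk ℓ ⁻¹' T) = binomial m (p ℓ)
                {d : ℕ | (m : ℝ) * p ℓ / 2 < |(d : ℝ) - m * p ℓ|} := by
              change binomial m (p ℓ) _ = _
              congr 1
              ext d
              simp [hT, hℓ]
            rw [this, ← ENNReal.ofReal_toReal (measure_ne_top (binomial m (p ℓ)) _)]
            exact ENNReal.ofReal_le_ofReal hb
          · have : Prod.mk ℓ ⁻¹' T = ∅ := by ext d; simp [hT, hℓ]
            rw [this]; simp
      _ = _ := by simp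
  have hsub : {ω | ¬ (S ω ≤ L ∧ |(D ω : ℝ) - m * p (S ω)| ≤ m * p (S ω) / 2)} ⊆
      {ω | L < S ω} ∪ {ω | S ω ≤ L ∧ (m : ℝ) * p (S ω) < K} ∪ {ω | (S ω, D ω) ∈ T} := by
    intro ω hω
    simp only [hT, Set.mem_union, Set.mem_ofPred_eq, not_and_or, not_le] at hω ⊢
    by_cases h1 : L < S ω
    · exact .inl (.inl h1)
    · by_cases h2 : (m : ℝ) * p (S ω) < K
      · exact .inl (.inr ⟨not_lt.1 h1, h2⟩)
      · exact .inr ⟨not_lt.1 h2, hω.resolve_left h1⟩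
  have h3 := measureReal_mono (μ := P) hsub
  have h4 := measureReal_union_le (μ := P)
    ({ω | L < S ω} ∪ {ω | S ω ≤ L ∧ (m : ℝ) * p (S ω) < K}) {ω | (S ω, D ω) ∈ T}
  have h5 := measureReal_union_le (μ := P) {ω | L < S ω} {ω | S ω ≤ L ∧ (m : ℝ) * p (S ω) < K}
  linarith

/-! ### Passing to logarithms and to the limit -/

theorem log_approx {d l : ℝ} (hl : 0 < l) (h : |d - l| ≤ l / 2) :
    0 < d ∧ |Real.log d - Real.log l| ≤ Real.log 2 := by
  rw [abs_le] at h
  have hd : 0 < d := by linarith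
  refine ⟨hd, abs_le.2 ⟨?_, ?_⟩⟩
  · have := Real.log_le_log hl (by linarith : l ≤ 2 * d)
    rw [Real.log_mul two_ne_zero hd.ne'] at this
    linarith
  · have := Real.log_le_log hd (by linarith : d ≤ 2 * l)
    rw [Real.log_mul two_ne_zero hl.ne'] at this
    linarith

/-- Sequences within `r n → 0` of each other off events of vanishing probability differ by a
sequence that tends to `0` in measure; no measurability is needed. -/
theorem tendstoInMeasure_of_bad {Ω : Type*} [MeasurableSpace Ω] {P : Measure Ω}
    [IsProbabilityMeasure P] {U V : ℕ → Ω → ℝ} {bad : ℕ → Set Ω} {r : ℕ → ℝ}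
    (hr : Tendsto r atTop (nhds 0)) (hbad : Tendsto (fun n => P.real (bad n)) atTop (nhds 0))
    (h : ∀ n, ∀ ω ∉ bad n, |V n ω - U n ω| ≤ r n) : TendstoInMeasure P (V - U) atTop 0 := by
  rw [tendstoInMeasure_iff_measureReal_norm]
  intro ε hε
  refine squeeze_zero' (Eventually.of_forall fun _ => measureReal_nonneg) ?_ hbad
  filter_upwards [hr.eventually_lt_const hε] with n hn
  refine measureReal_mono fun ω hω => ?_
  by_contra hb
  have := h n ω hb
  simp only [Set.mem_ofPred_eq, Pi.sub_apply, Pi.zero_apply, sub_zero, Real.norm_eq_abs] at hω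
  linarith

theorem tendsto_prob_le_atBot {Ω Ω' : Type*} [MeasurableSpace Ω] [MeasurableSpace Ω']
    {P : Measure Ω} {P' : Measure Ω'} [IsProbabilityMeasure P] [IsProbabilityMeasure P']
    {X : ℕ → Ω → ℝ} {Z : Ω' → ℝ} (h : TendstoInDistribution X atTop Z (fun _ => P) P')
    [NullSingletonClass (P'.map Z)] {a : ℕ → ℝ} (ha : Tendsto a atTop atBot) :
    Tendsto (fun n => P.real {ω | X n ω ≤ a n}) atTop (nhds 0) := by
  have : IsProbabilityMeasure (P'.map Z) := Measure.isProbabilityMeasure_map h.aemeasurable_limit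
  rw [Metric.tendsto_nhds]
  intro ε hε
  filter_upwards [uniform_cdf h (half_pos hε),
    ((tendsto_cdf_atBot (P'.map Z)).comp ha).eventually_lt_const (half_pos hε)] with n h1 h2
  have h3 := (abs_le.1 (h1 (a n))).2
  simp only [Function.comp] at h2
  rw [Real.dist_eq, sub_zero, abs_of_nonneg measureReal_nonneg]
  linarith

/-! ### The uniform log-normal approximation -/

/-- uniform log-normal approximation of the distribution function
of `D_n`: `sup_{t ≥ 0} |P(D_n ≤ t) - P(e^{σZ} ≤ x_n(t))| → 0` with
`x_n(t) = (t · n^{-(1 + ρ_n ln(Γ1^μ1 Γ0^μ0))})^{1/√L_n}`. -/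
theorem stmt8 {Ω : Type*} [MeasurableSpace Ω] (P : Measure Ω) [IsProbabilityMeasure P]
    (μ0 μ1 Γ0 Γ1 : ℝ) (hμ0 : μ0 ∈ Set.Ioo (0:ℝ) 1) (hμ1 : μ1 ∈ Set.Ioo (0:ℝ) 1)
    (hμ : μ0 + μ1 = 1) (hΓ0 : Γ0 ∈ Set.Ioo (0:ℝ) 1) (hΓ1 : Γ1 ∈ Set.Ioo (0:ℝ) 1)
    (hΓ : Γ0 ≠ Γ1) (ρ : ℝ) (hρ : 0 < ρ)
    (hcond : 0 < 1 + ρ * Real.log (Γ1 ^ μ1 * Γ0 ^ μ0))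
    (L : ℕ → ℕ) (hL : IsAdmissible ρ L)
    (D S : ℕ → Ω → ℕ)
    (hDS : ∀ n, 2 ≤ n → IsCompoundBinomialPair P μ1 μ0 Γ1 Γ0 n (L n) (D n) (S n)) :
    Tendsto (fun n =>
        ⨆ t : {t : ℝ // 0 ≤ t},
          |(P {ω | (D n ω : ℝ) ≤ t.1}).toReal -
           (gaussianReal 0 1
              {z | Real.exp (Real.sqrt (μ0 * μ1) * Real.log (Γ1 / Γ0) * z) ≤
                (t.1 * (n : ℝ) ^
                    (-(1 + ((L n : ℝ) / Real.log n) * Real.log (Γ1 ^ μ1 * Γ0 ^ μ0)))) ^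
                  ((Real.sqrt (L n))⁻¹)}).toReal|)
      atTop (nhds 0) := by
  set a : ℝ := Real.log (Γ1 ^ μ1 * Γ0 ^ μ0) with ha
  have ha' : a = μ1 * Real.log Γ1 + μ0 * Real.log Γ0 := by
    rw [ha, Real.log_mul (by have := Real.rpow_pos_of_pos hΓ1.1 μ1; positivity)
      (by have := Real.rpow_pos_of_pos hΓ0.1 μ0; positivity), Real.log_rpow hΓ1.1,
      Real.log_rpow hΓ0.1]
  set sg : ℝ := Real.sqrt (μ0 * μ1) * Real.log (Γ1 / Γ0) with hsg
  have hvar : 0 < μ0 * μ1 := mul_pos hμ0.1 hμ1.1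
  have hsg0 : sg ≠ 0 := by
    refine mul_ne_zero (Real.sqrt_pos.2 hvar).ne' ?_
    rw [Real.log_div hΓ1.1.ne' hΓ0.1.ne', sub_ne_zero]
    exact fun h => hΓ (Real.log_injOn_pos hΓ1.1 hΓ0.1 h).symm
  -- The pairs are only constrained for `2 ≤ n`, so every sequence below is indexed by `n + 2`.
  rw [← tendsto_add_atTop_iff_nat 2]
  let q : unitInterval := ⟨μ1, hμ1.1.le, hμ1.2.le⟩
  have hq : 1 - (q : ℝ) = μ0 := by change 1 - μ1 = μ0; linarith
  let p : ℕ → ℕ → unitInterval := fun n ℓ => ⟨Γ1 ^ ℓ * Γ0 ^ (L (n + 2) - ℓ),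
    mul_nonneg (pow_nonneg hΓ1.1.le _) (pow_nonneg hΓ0.1.le _),
    mul_le_one₀ (pow_le_one₀ hΓ1.1.le hΓ1.2.le) (pow_nonneg hΓ0.1.le _)
      (pow_le_one₀ hΓ0.1.le hΓ0.2.le)⟩
  have hp0 (n ℓ : ℕ) : 0 < (p n ℓ : ℝ) := mul_pos (pow_pos hΓ1.1 _) (pow_pos hΓ0.1 _)
  have hDm (n : ℕ) : Measurable (D (n + 2)) := (hDS (n + 2) (by omega)).1
  have hSm (n : ℕ) : Measurable (S (n + 2)) := (hDS (n + 2) (by omega)).2.1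
  have hjoint (n : ℕ) := map_joint (P := P) (L (n + 2)) (n + 1) q (p n) (D (n + 2)) (S (n + 2))
    (hDm n) (hSm n) (fun d hd ℓ hℓ => by
      rw [(hDS (n + 2) (by omega)).2.2 d hd ℓ hℓ, hq]
      congr 1
      change _ = _ * μ1 ^ ℓ * _ * (_ * (Γ1 ^ ℓ * Γ0 ^ (L (n + 2) - ℓ)) ^ d *
        (1 - Γ1 ^ ℓ * Γ0 ^ (L (n + 2) - ℓ)) ^ _)
      simp only [Nat.add_succ_sub_one]
      ring)
  -- `L n → ∞` because `L n / log n → ρ > 0`.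
  have hlog : Tendsto (fun n : ℕ => Real.log ((n + 2 : ℕ) : ℝ)) atTop atTop :=
    (Real.tendsto_log_atTop.comp tendsto_natCast_atTop_atTop).comp (tendsto_add_atTop_nat 2)
  have hlog0 (n : ℕ) : 0 < Real.log ((n + 2 : ℕ) : ℝ) :=
    Real.log_pos (by push_cast; linarith [(Nat.cast_nonneg n : (0 : ℝ) ≤ n)])
  have hratio : Tendsto (fun n : ℕ => (L (n + 2) : ℝ) / Real.log ((n + 2 : ℕ) : ℝ)) atTop
      (nhds ρ) := by
    have := ((hL.2.comp (tendsto_add_atTop_nat 2)).const_mul ρ)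
    rw [mul_one] at this
    refine this.congr fun n => ?_
    have := (hlog0 n).ne'
    simp only [Function.comp]
    field_simp
  have hLR : Tendsto (fun n : ℕ => (L (n + 2) : ℝ)) atTop atTop := by
    refine (hratio.pos_mul_atTop hρ hlog).congr fun n => ?_
    have := (hlog0 n).ne'
    field_simp
  have hLN : Tendsto (fun n : ℕ => L (n + 2)) atTop atTop := tendsto_natCast_atTop_iff.1 hLR
  have hL0 (n : ℕ) : 0 < (L (n + 2) : ℝ) := by exact_mod_cast hL.1 (n + 2)
  have hsL (n : ℕ) : 0 < √(L (n + 2) : ℝ) := Real.sqrt_pos.2 (hL0 n)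
  have hsqrt : Tendsto (fun n : ℕ => √(L (n + 2) : ℝ)) atTop atTop :=
    Real.tendsto_sqrt_atTop.comp hLR
  -- The centring `c n` of `log D`; the hypothesis `hcond` makes it dominate the fluctuations,
  -- which are of order `√L`.
  set c : ℕ → ℝ := fun n => Real.log ((n + 2 : ℕ) : ℝ) + L (n + 2) * a with hc
  have hcL : Tendsto (fun n => c n / √(L (n + 2) : ℝ)) atTop atTop := by
    have h1 : Tendsto (fun n => c n / L (n + 2)) atTop (nhds (ρ⁻¹ + a)) := by
      refine ((hratio.inv₀ hρ.ne').add_const a).congr fun n => ?_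
      have := (hL0 n).ne'
      simp only [hc]
      field_simp
    have h2 : 0 < ρ⁻¹ + a := by
      have : ρ⁻¹ + a = ρ⁻¹ * (1 + ρ * a) := by field_simp
      rw [this]; positivity
    refine (h1.pos_mul_atTop h2 hsqrt).congr fun n => ?_
    have h3 := (hsL n).ne'
    nth_rw 1 [← Real.mul_self_sqrt (hL0 n).le]
    field_simp
  -- `U n` is the fluctuation of the log conditional mean on the scale `√L`; its limit is `sg * Z`.
  have hW := tendstoInDistribution_binomial (P := P) q hμ1.1 hμ1.2 (fun n => L (n + 2)) hLN
    (fun n => S (n + 2)) (fun n => hasLaw_fst _ (n + 1) q (p n) _ _ (hDm n) (hSm n) (hjoint n))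
  have hU := hW.continuous_comp (g := fun x => sg * x) (by fun_prop)
  have hmap : (gaussianReal 0 1).map ((fun x => sg * x) ∘ (id : ℝ → ℝ)) =
      gaussianReal 0 ⟨sg ^ 2, sq_nonneg _⟩ := by
    rw [Function.comp_id, gaussianReal_map_const_mul, mul_zero, mul_one]; rfl
  have hnull : NullSingletonClass ((gaussianReal 0 1).map ((fun x => sg * x) ∘ (id : ℝ → ℝ))) := by
    rw [hmap]
    refine nullSingletonClass_gaussianReal ?_
    intro h
    have h' : sg ^ 2 = 0 := congrArg NNReal.toReal h
    exact hsg0 ((pow_eq_zero_iff two_ne_zero).1 h')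
  set U : ℕ → Ω → ℝ := fun n => (fun x => sg * x) ∘ (fun ω => (√(L (n + 2)))⁻¹ *
    (√(q * (1 - q)))⁻¹ * ((S (n + 2) ω : ℝ) - L (n + 2) * q)) with hUdef
  have hUval (n ω) : √(L (n + 2) : ℝ) * U n ω =
      (Real.log Γ1 - Real.log Γ0) * ((S (n + 2) ω : ℝ) - L (n + 2) * μ1) := by
    have h1 := (hsL n).ne'
    have h2 := (Real.sqrt_pos.2 hvar).ne'
    have h3 : (q : ℝ) * (1 - q) = μ0 * μ1 := by rw [hq, mul_comm]
    simp only [hUdef, Function.comp, h3, hsg]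
    rw [Real.log_div hΓ1.1.ne' hΓ0.1.ne']
    change _ * (_ * (_ * ((S (n + 2) ω : ℝ) - L (n + 2) * μ1))) = _
    field_simp
  -- Here `n + 1` is the number of trials and `n + 2` the size, so `c n` differs from the centring
  -- below by a bounded amount (`hlogn`), negligible after division by `√L`.
  have hlam (n ω) (h : S (n + 2) ω ≤ L (n + 2)) :
      Real.log (((n + 1 : ℕ) : ℝ) * p n (S (n + 2) ω)) =
        Real.log ((n + 1 : ℕ) : ℝ) + L (n + 2) * a + √(L (n + 2) : ℝ) * U n ω := by
    rw [Real.log_mul (by positivity) (hp0 _ _).ne', hUval, ha']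
    change _ + Real.log (Γ1 ^ _ * Γ0 ^ _) = _
    rw [Real.log_mul (pow_pos hΓ1.1 _).ne' (pow_pos hΓ0.1 _).ne', Real.log_pow, Real.log_pow,
      Nat.cast_sub h, show μ0 = 1 - μ1 by linarith]
    ring
  have hlogn (n : ℕ) : |Real.log ((n + 1 : ℕ) : ℝ) - Real.log ((n + 2 : ℕ) : ℝ)| ≤
      Real.log 2 := by
    refine (log_approx (by positivity) ?_).2
    push_cast
    rw [abs_le]; constructor <;> linarith [(Nat.cast_nonneg n : (0 : ℝ) ≤ n)]
  set bad : ℕ → Set Ω := fun n => {ω | ¬ (S (n + 2) ω ≤ L (n + 2) ∧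
    |(D (n + 2) ω : ℝ) - (n + 1 : ℕ) * p n (S (n + 2) ω)| ≤
      (n + 1 : ℕ) * p n (S (n + 2) ω) / 2)} with hbad
  -- On the event `conditional mean < 8 / ε` the variable `U n` lies below a sequence tending to
  -- `-∞`, which has vanishing probability.
  have hbad0 : Tendsto (fun n => P.real (bad n)) atTop (nhds 0) := by
    rw [Metric.tendsto_nhds]
    intro ε hε
    have hK : 0 < 8 / ε := by positivity
    have hs : Tendsto (fun n => (Real.log (8 / ε) + Real.log 2) / √(L (n + 2) : ℝ) -
        c n / √(L (n + 2) : ℝ)) atTop atBot := by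
      have := (hsqrt.const_div_atTop (Real.log (8 / ε) + Real.log 2))
      simp only [sub_eq_add_neg]
      exact this.add_atBot (tendsto_neg_atTop_atBot.comp hcL)
    filter_upwards [(tendsto_prob_le_atBot hU hs).eventually_lt_const (half_pos hε)] with n hn
    have h1 := measureReal_bad_le (P := P) (L (n + 2)) (n + 1) q (p n) _ _ (hDm n) (hSm n)
      (hjoint n) hK
    have h2 : (4 : ℝ) / (8 / ε) = ε / 2 := by field_simp; norm_num
    have h3 : P.real {ω | S (n + 2) ω ≤ L (n + 2) ∧
        ((n + 1 : ℕ) : ℝ) * p n (S (n + 2) ω) < 8 / ε} ≤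
        P.real {ω | U n ω ≤ (Real.log (8 / ε) + Real.log 2) / √(L (n + 2) : ℝ) -
          c n / √(L (n + 2) : ℝ)} := by
      refine measureReal_mono ?_
      rintro ω ⟨hω1, hω2⟩
      have h4 := Real.log_le_log (mul_pos (by positivity) (hp0 _ _)) hω2.le
      rw [hlam n ω hω1] at h4
      have h5 := (abs_le.1 (hlogn n)).1
      change U n ω ≤ _
      rw [← sub_div, le_div_iff₀ (hsL n)]
      simp only [hc]
      linarith
    rw [Real.dist_eq, sub_zero, abs_of_nonneg measureReal_nonneg]
    change P.real {ω | _} < ε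
    linarith
  set V : ℕ → Ω → ℝ := fun n ω => (Real.log (D (n + 2) ω) - c n) / √(L (n + 2) : ℝ) with hVdef
  have hgood (n ω) (h : ω ∉ bad n) : 0 < (D (n + 2) ω : ℝ) ∧
      |V n ω - U n ω| ≤ 2 * Real.log 2 / √(L (n + 2) : ℝ) := by
    simp only [hbad, Set.mem_ofPred_eq, not_not] at h
    obtain ⟨h1, h2⟩ := log_approx (mul_pos (by positivity) (hp0 _ _)) h.2
    refine ⟨h1, ?_⟩
    rw [hlam n ω h.1] at h2
    have e : V n ω - U n ω = (Real.log (D (n + 2) ω) - c n - √(L (n + 2) : ℝ) * U n ω) /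
        √(L (n + 2) : ℝ) := by
      have := (hsL n).ne'
      simp only [hVdef]; field_simp
    rw [e, abs_div, abs_of_pos (hsL n)]
    refine div_le_div_of_nonneg_right ?_ (hsL n).le
    have h3 := abs_le.1 (hlogn n)
    have h2 := abs_le.1 h2
    simp only [hc]
    rw [abs_le]; constructor <;> linarith
  have hVm (n : ℕ) : AEMeasurable (V n) P := by
    have h1 : Measurable (fun ω => (D (n + 2) ω : ℝ)) :=
      (measurable_of_countable (fun k : ℕ => (k : ℝ))).comp (hDm n)
    exact (((Real.measurable_log.comp h1).sub_const _).div_const _).aemeasurable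
  have hV := tendstoInDistribution_of_tendstoInMeasure_sub V _ hU
    (tendstoInMeasure_of_bad (hsqrt.const_div_atTop (2 * Real.log 2)) hbad0
      fun n ω h => (hgood n ω h).2) hVm
  -- Off `bad n`, the event `D ≤ t` is the event `V n ≤ log x_n(t)`, so the uniform convergence of
  -- the distribution functions of `V n` transfers to `D` at the cost of `P (bad n)`.
  rw [Metric.tendsto_nhds]
  intro ε hε
  filter_upwards [uniform_cdf hV (by positivity : 0 < ε / 4),
    hbad0.eventually_lt_const (by positivity : 0 < ε / 4)] with n h1 h2
  rw [Real.dist_eq, sub_zero, abs_of_nonneg (Real.iSup_nonneg fun _ => abs_nonneg _)]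
  have : Nonempty {t : ℝ // 0 ≤ t} := ⟨⟨0, le_rfl⟩⟩
  refine (ciSup_le (c := ε / 2) ?_).trans_lt (by linarith)
  rintro ⟨t, ht⟩
  simp only
  have hn0 : (0 : ℝ) < (n + 2 : ℕ) := by positivity
  -- At `t = 0` the threshold is `0 ^ (1 / √L) = 0`, and `D = 0` only happens on `bad n`.
  rcases ht.eq_or_lt with rfl | ht
  · have hz : {z : ℝ | Real.exp (sg * z) ≤ ((0 : ℝ) * ((n + 2 : ℕ) : ℝ) ^
        (-(1 + ((L (n + 2) : ℝ) / Real.log ((n + 2 : ℕ) : ℝ)) * a))) ^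
          ((√(L (n + 2) : ℝ))⁻¹)} = ∅ := by
      ext z
      rw [zero_mul, Real.zero_rpow (inv_ne_zero (hsL n).ne')]
      simp [Real.exp_pos]
    rw [hz, measure_empty, ENNReal.toReal_zero, sub_zero, abs_of_nonneg ENNReal.toReal_nonneg]
    have : P.real {ω | (D (n + 2) ω : ℝ) ≤ 0} ≤ P.real (bad n) := by
      refine measureReal_mono ?_ (measure_ne_top _ _)
      intro ω hω
      replace hω : (D (n + 2) ω : ℝ) ≤ 0 := hω
      by_contra hb
      exact absurd (hgood n ω hb).1 (not_lt.2 hω)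
    change P.real _ ≤ _
    linarith
  · set y : ℝ := (Real.log t - c n) / √(L (n + 2) : ℝ) with hy
    have hx : 0 < t * ((n + 2 : ℕ) : ℝ) ^
        (-(1 + ((L (n + 2) : ℝ) / Real.log ((n + 2 : ℕ) : ℝ)) * a)) :=
      mul_pos ht (Real.rpow_pos_of_pos hn0 _)
    have hlogx : Real.log ((t * ((n + 2 : ℕ) : ℝ) ^
        (-(1 + ((L (n + 2) : ℝ) / Real.log ((n + 2 : ℕ) : ℝ)) * a))) ^
          ((√(L (n + 2) : ℝ))⁻¹)) = y := by
      rw [Real.log_rpow hx, Real.log_mul ht.ne' (Real.rpow_pos_of_pos hn0 _).ne',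
        Real.log_rpow hn0]
      have := (hlog0 n).ne'
      have := (hsL n).ne'
      simp only [hy, hc]
      field_simp
      ring
    have hz : (gaussianReal 0 1 {z : ℝ | Real.exp (sg * z) ≤ (t * ((n + 2 : ℕ) : ℝ) ^
        (-(1 + ((L (n + 2) : ℝ) / Real.log ((n + 2 : ℕ) : ℝ)) * a))) ^
          ((√(L (n + 2) : ℝ))⁻¹)}).toReal =
        cdf ((gaussianReal 0 1).map ((fun x => sg * x) ∘ (id : ℝ → ℝ))) y := by
      have : IsProbabilityMeasure ((gaussianReal 0 1).map ((fun x => sg * x) ∘ (id : ℝ → ℝ))) :=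
        Measure.isProbabilityMeasure_map (by fun_prop)
      rw [cdf_eq_real, measureReal_def, Measure.map_apply (by fun_prop) measurableSet_Iic]
      congr 2
      ext z
      simp only [Set.mem_ofPred_eq, Set.mem_preimage, Set.mem_Iic, Function.comp, id]
      rw [← Real.le_log_iff_exp_le (Real.rpow_pos_of_pos hx _), hlogx]
    rw [hz]
    have hiff (ω) (h : ω ∉ bad n) : (D (n + 2) ω : ℝ) ≤ t ↔ V n ω ≤ y := by
      simp only [hVdef, hy]
      rw [div_le_div_iff_of_pos_right (hsL n), sub_le_sub_iff_right,
        Real.log_le_log_iff (hgood n ω h).1 ht]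
    have e1 : P.real {ω | (D (n + 2) ω : ℝ) ≤ t} ≤ P.real {ω | V n ω ≤ y} + P.real (bad n) := by
      refine (measureReal_mono (s₂ := {ω | V n ω ≤ y} ∪ bad n) ?_ (measure_ne_top _ _)).trans
        (measureReal_union_le _ _)
      intro ω hω
      by_cases hb : ω ∈ bad n
      · exact .inr hb
      · exact .inl ((hiff ω hb).1 hω)
    have e2 : P.real {ω | V n ω ≤ y} ≤ P.real {ω | (D (n + 2) ω : ℝ) ≤ t} + P.real (bad n) := by
      refine (measureReal_mono (s₂ := {ω | (D (n + 2) ω : ℝ) ≤ t} ∪ bad n) ?_ (measure_ne_top _ _)).trans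
        (measureReal_union_le _ _)
      intro ω hω
      by_cases hb : ω ∈ bad n
      · exact .inr hb
      · exact .inl ((hiff ω hb).2 hω)
    have e3 := abs_le.1 (h1 y)
    change |P.real _ - _| ≤ _
    rw [abs_le]; constructor <;> linarith
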